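/- Suppose 1 ≤ S < N and let x₀ ∈ X_S with ‖x₀‖₀ = S. Then the Barankin bound at x₀ (the infimum of ε(x₀; x̂) over all measurable unbiased estimators x̂) is bounded above by the constrained Barankin bound BB_c(x₀) = S σ² + (N − S) σ² · (1 − ∏_{l ∈ supp(x₀)} g(x₀_l; σ²)); that is, there exists a measurable unbiased estimator x̂ with ε(x₀; x̂) = BB_c(x₀). -/

import Mathlib

open MeasureTheory ProbabilityTheory Filter
open scoped ENNReal Classical

/-- The product Gaussian measure `P_x` on `ℝ^N` with mean `x` and variance `σ²` per coordinate. -/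
noncomputable def gaussP (N : ℕ) (σ : ℝ) (x : Fin N → ℝ) : Measure (Fin N → ℝ) :=
  MeasureTheory.Measure.pi fun i => gaussianReal (x i) (Real.toNNReal (σ ^ 2))

/-- The support of `x`: indices with nonzero entries. Its cardinality is `‖x‖₀`. -/
noncomputable def supp {N : ℕ} (x : Fin N → ℝ) : Finset (Fin N) :=
  Finset.univ.filter fun i => x i ≠ 0

/-- The sparse parameter set `X_S = {x : ‖x‖₀ ≤ S}`. -/
def sparseSet (N S : ℕ) : Set (Fin N → ℝ) := {x | (supp x).card ≤ S}

/-- An estimator is unbiased if each component is `P_x`-integrable with mean `x i`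
for every `x ∈ X_S`. -/
def Unbiased (N S : ℕ) (σ : ℝ) (est : (Fin N → ℝ) → Fin N → ℝ) : Prop :=
  ∀ x ∈ sparseSet N S, ∀ i,
    Integrable (fun y => est y i) (gaussP N σ x) ∧
    (∫ y, est y i ∂gaussP N σ x) = x i

/-- The MSE `ε(x; x̂) = ∫ ‖x̂(y) − x‖₂² dP_x(y)`, as an extended real. -/
noncomputable def MSE (N : ℕ) (σ : ℝ) (est : (Fin N → ℝ) → Fin N → ℝ)
    (x : Fin N → ℝ) : ℝ≥0∞ :=
  ∫⁻ y, ENNReal.ofReal (∑ i, (est y i - x i) ^ 2) ∂gaussP N σ x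

/-- `g(x; σ²) = (2/√(2πσ²)) ∫₀^∞ exp(−(y²+x²)/(2σ²)) sinh(yx/σ²) tanh(yx/σ²) dy`. -/
noncomputable def g (σ x : ℝ) : ℝ :=
  (2 / Real.sqrt (2 * Real.pi * σ ^ 2)) *
    ∫ y in Set.Ioi (0 : ℝ),
      Real.exp (-(y ^ 2 + x ^ 2) / (2 * σ ^ 2)) * Real.sinh (y * x / σ ^ 2) *
        Real.tanh (y * x / σ ^ 2)

/-!
Coordinates in the support of `x₀` are estimated by the observation itself, and a coordinate
`i ∉ supp x₀` by `y i * (1 - ∏ l ∈ supp x₀, h l (y l))` with odd functions `h l`. The correction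
`y i * ∏ l, h l (y l)` has mean `x i * ∏ l, E (h l)`, and oddness makes `E (h l)` vanish when
`x l = 0`. An `S`-sparse `x` with `x i ≠ 0` must vanish somewhere on the `S` indices of `supp x₀`,
so the estimator is unbiased on `X_S`. At `x₀` the risk of coordinate `i` is
`σ² * (1 - 2 * ∏ l, E (h l) + ∏ l, E (h l ^ 2))`. For `h l = tanh (· * x₀ l / σ²)`, folding the
Gaussian integral onto the positive half-line shows that `E (h l)` and `E (h l ^ 2)` both equal
`g σ (x₀ l)`, because `sinh * tanh = cosh * tanh ^ 2`.
-/

open scoped NNReal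

section FinsetProduct

variable {ι : Type*} {E : ι → Type*} {A : Finset ι} {i : ι}

theorem mul_finsetProd_eq_prod_insert_update [DecidableEq ι] {M : Type*} [CommMonoid M]
    (hi : i ∉ A) (T : ∀ l, E l → M) (φ : E i) (f : ∀ l, E l) :
    T i φ * ∏ l ∈ A, T l (f l) = ∏ l ∈ insert i A, T l (Function.update f i φ l) := by
  rw [Finset.prod_insert hi, Function.update_self]
  congr 1
  exact Finset.prod_congr rfl fun l hl ↦ by
    rw [Function.update_of_ne (ne_of_mem_of_not_mem hl hi)]

variable {𝕜 : Type*} [Fintype ι] [RCLike 𝕜] {mE : ∀ i, MeasurableSpace (E i)}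
  {μ : ∀ i, Measure (E i)} [∀ i, IsProbabilityMeasure (μ i)]

theorem integrable_finsetProd_eval {f : ∀ i, E i → 𝕜} (hf : ∀ l ∈ A, Integrable (f l) (μ l)) :
    Integrable (fun y ↦ ∏ l ∈ A, f l (y l)) (Measure.pi μ) := by
  have hext (l : ι) : Integrable (if l ∈ A then f l else 1) (μ l) := by
    split_ifs with hl
    exacts [hf l hl, integrable_const 1]
  simpa only [ite_apply, Pi.one_apply, Finset.prod_ite_mem, Finset.univ_inter] using
    Integrable.fintype_prod_dep hext

theorem integral_finsetProd_eval (A : Finset ι) (f : ∀ i, E i → 𝕜) :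
    ∫ y, ∏ l ∈ A, f l (y l) ∂Measure.pi μ = ∏ l ∈ A, ∫ u, f l u ∂μ l := by
  have hext := integral_fintype_prod_eq_prod (μ := μ) fun l ↦ if l ∈ A then f l else 1
  have hfactor (l : ι) : ∫ u, (if l ∈ A then f l u else 1) ∂μ l =
      if l ∈ A then ∫ u, f l u ∂μ l else 1 := by
    split_ifs <;> simp
  simpa only [ite_apply, Pi.one_apply, hfactor, Finset.prod_ite_mem, Finset.univ_inter] using hext

theorem integrable_eval_mul_finsetProd_eval (hi : i ∉ A) {φ : E i → 𝕜} (hφ : Integrable φ (μ i))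
    {f : ∀ i, E i → 𝕜} (hf : ∀ l ∈ A, Integrable (f l) (μ l)) :
    Integrable (fun y ↦ φ (y i) * ∏ l ∈ A, f l (y l)) (Measure.pi μ) := by
  simp only [fun y : ∀ l, E l ↦ mul_finsetProd_eq_prod_insert_update hi (fun l u ↦ u (y l)) φ f]
  refine integrable_finsetProd_eval fun l hl ↦ ?_
  obtain rfl | hl := Finset.mem_insert.mp hl
  · rwa [Function.update_self]
  · rw [Function.update_of_ne (ne_of_mem_of_not_mem hl hi)]
    exact hf l hl

theorem integral_eval_mul_finsetProd_eval (hi : i ∉ A) (φ : E i → 𝕜) (f : ∀ i, E i → 𝕜) :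
    ∫ y, φ (y i) * ∏ l ∈ A, f l (y l) ∂Measure.pi μ =
      (∫ u, φ u ∂μ i) * ∏ l ∈ A, ∫ u, f l u ∂μ l := by
  simp only [fun y : ∀ l, E l ↦ mul_finsetProd_eq_prod_insert_update hi (fun l u ↦ u (y l)) φ f]
  rw [integral_finsetProd_eval]
  exact (mul_finsetProd_eq_prod_insert_update hi (fun l u ↦ ∫ z, u z ∂μ l) φ f).symm

end FinsetProduct

section ProductShrinkage

/-- The estimator that returns the observation on the coordinates in `A` and multiplies every other
coordinate by the common random factor `1 - ∏ l ∈ A, h l (y l)`. When each `h l` is odd, the factor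
has mean one as soon as the mean vector vanishes somewhere on `A`. -/
noncomputable def productShrinkage {ι : Type*} (A : Finset ι) (h : ι → ℝ → ℝ) (y : ι → ℝ) (i : ι) :
    ℝ :=
  if i ∈ A then y i else y i * (1 - ∏ l ∈ A, h l (y l))

variable {ι : Type*} {A : Finset ι} {h : ι → ℝ → ℝ} {i : ι}

theorem productShrinkage_of_mem (hi : i ∈ A) (y : ι → ℝ) : productShrinkage A h y i = y i :=
  if_pos hi

theorem productShrinkage_of_notMem (hi : i ∉ A) (y : ι → ℝ) :
    productShrinkage A h y i = y i - y i * ∏ l ∈ A, h l (y l) := by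
  rw [productShrinkage, if_neg hi, mul_one_sub]

theorem measurable_productShrinkage (hh : ∀ l ∈ A, Measurable (h l)) :
    Measurable (productShrinkage A h) := by
  refine measurable_pi_lambda _ fun i ↦ ?_
  have hprod : Measurable fun y : ι → ℝ ↦ ∏ l ∈ A, h l (y l) :=
    Finset.measurable_prod A fun l hl ↦ (hh l hl).comp (measurable_pi_apply l)
  by_cases hi : i ∈ A
  · simpa only [productShrinkage_of_mem hi] using measurable_pi_apply i
  · simp only [productShrinkage_of_notMem hi]
    exact (measurable_pi_apply i).sub ((measurable_pi_apply i).mul hprod)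

theorem productShrinkage_sq_of_notMem (hi : i ∉ A) (y : ι → ℝ) :
    productShrinkage A h y i ^ 2 =
      y i ^ 2 - 2 * (y i ^ 2 * ∏ l ∈ A, h l (y l)) + y i ^ 2 * ∏ l ∈ A, h l (y l) ^ 2 := by
  rw [productShrinkage_of_notMem hi, Finset.prod_pow]
  ring

variable [Fintype ι] {μ : ι → Measure ℝ} [∀ i, IsProbabilityMeasure (μ i)]

theorem integrable_productShrinkage (hμ : Integrable (fun u ↦ u) (μ i))
    (hh : ∀ l ∈ A, Integrable (h l) (μ l)) :
    Integrable (fun y ↦ productShrinkage A h y i) (Measure.pi μ) := by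
  by_cases hi : i ∈ A
  · simpa only [productShrinkage_of_mem hi] using
      integrable_comp_eval (X := fun _ ↦ ℝ) hμ
  · simp only [productShrinkage_of_notMem hi]
    exact (integrable_comp_eval hμ).sub (integrable_eval_mul_finsetProd_eval hi hμ hh)

theorem integral_productShrinkage_of_notMem (hi : i ∉ A) (hμ : Integrable (fun u ↦ u) (μ i))
    (hh : ∀ l ∈ A, Integrable (h l) (μ l)) :
    ∫ y, productShrinkage A h y i ∂Measure.pi μ =
      (∫ u, u ∂μ i) * (1 - ∏ l ∈ A, ∫ u, h l u ∂μ l) := by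
  simp only [productShrinkage_of_notMem hi]
  rw [integral_sub (integrable_comp_eval hμ) (integrable_eval_mul_finsetProd_eval hi hμ hh),
    integral_eval, integral_eval_mul_finsetProd_eval hi fun u ↦ u, mul_one_sub]

theorem integrable_productShrinkage_sq_of_notMem (hi : i ∉ A) (hμ : MemLp id 2 (μ i))
    (hh : ∀ l ∈ A, MemLp (h l) 2 (μ l)) :
    Integrable (fun y ↦ productShrinkage A h y i ^ 2) (Measure.pi μ) := by
  simp only [productShrinkage_sq_of_notMem hi]
  have hsq : Integrable (fun u : ℝ ↦ u ^ 2) (μ i) := hμ.integrable_sq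
  have hint₀ : Integrable (fun y : ι → ℝ ↦ y i ^ 2) (Measure.pi μ) :=
    integrable_comp_eval (f := (· ^ 2)) hsq
  have hint₁ := (integrable_eval_mul_finsetProd_eval hi hsq fun l hl ↦
    (hh l hl).integrable one_le_two).const_mul 2
  have hint₂ := integrable_eval_mul_finsetProd_eval hi hsq fun l hl ↦ (hh l hl).integrable_sq
  exact (hint₀.sub hint₁).add hint₂

theorem integral_productShrinkage_sq_of_notMem (hi : i ∉ A) (hμ : MemLp id 2 (μ i))
    (hh : ∀ l ∈ A, MemLp (h l) 2 (μ l)) :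
    ∫ y, productShrinkage A h y i ^ 2 ∂Measure.pi μ =
      (∫ u, u ^ 2 ∂μ i) *
        (1 - 2 * ∏ l ∈ A, ∫ u, h l u ∂μ l + ∏ l ∈ A, ∫ u, h l u ^ 2 ∂μ l) := by
  have hsq : Integrable (fun u : ℝ ↦ u ^ 2) (μ i) := hμ.integrable_sq
  have hint₀ : Integrable (fun y : ι → ℝ ↦ y i ^ 2) (Measure.pi μ) :=
    integrable_comp_eval (f := (· ^ 2)) hsq
  have hint₁ := (integrable_eval_mul_finsetProd_eval hi hsq fun l hl ↦
    (hh l hl).integrable one_le_two).const_mul 2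
  have hint₂ := integrable_eval_mul_finsetProd_eval hi hsq fun l hl ↦ (hh l hl).integrable_sq
  simp only [productShrinkage_sq_of_notMem hi]
  rw [integral_add ?_ hint₂, integral_sub hint₀ hint₁, integral_const_mul,
    integral_comp_eval (f := (· ^ 2)) hsq.aestronglyMeasurable,
    integral_eval_mul_finsetProd_eval hi (· ^ 2),
    integral_eval_mul_finsetProd_eval hi (· ^ 2) fun l u ↦ h l u ^ 2]
  · ring
  · exact hint₀.sub hint₁

end ProductShrinkage

section Reflection

variable {F : Type*} [NormedAddCommGroup F] [NormedSpace ℝ F]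

theorem integral_eq_zero_of_odd {G : Type*} [MeasurableSpace G] [AddGroup G] [MeasurableNeg G]
    {μ : Measure G} [μ.IsNegInvariant] {f : G → F} (hf : Function.Odd f) : ∫ u, f u ∂μ = 0 := by
  have hneg := integral_neg_eq_self f μ
  simp only [hf _, integral_neg] at hneg
  have := IsAddTorsionFree.of_isTorsionFree ℝ F
  exact neg_eq_self.mp hneg

theorem integral_eq_integral_Ioi_add_comp_neg {f : ℝ → F} (hf : Integrable f) :
    ∫ u, f u = ∫ u in Set.Ioi 0, (f u + f (-u)) := by
  rw [integral_add hf.integrableOn hf.comp_neg.integrableOn, integral_comp_neg_Ioi, neg_zero,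
    add_comm, intervalIntegral.integral_Iic_add_Ioi hf.integrableOn hf.integrableOn]

end Reflection

section Gaussian

variable {v : ℝ≥0} {f : ℝ → ℝ}

instance isNegInvariant_gaussianReal_zero : (gaussianReal 0 v).IsNegInvariant :=
  ⟨gaussianReal_map_neg.trans (by rw [neg_zero])⟩

theorem integral_sub_sq_gaussianReal (m : ℝ) (v : ℝ≥0) :
    ∫ u, (u - m) ^ 2 ∂gaussianReal m v = v := by
  rw [← variance_fun_id_gaussianReal (μ := m), variance_eq_integral (by fun_prop),
    integral_id_gaussianReal]

theorem integrable_sub_sq_gaussianReal (m : ℝ) (v : ℝ≥0) :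
    Integrable (fun u ↦ (u - m) ^ 2) (gaussianReal m v) :=
  ((memLp_id_gaussianReal 2).sub (memLp_const m)).integrable_sq

theorem integrable_gaussianPDFReal_mul (hv : v ≠ 0) {m : ℝ}
    (hf : Integrable f (gaussianReal m v)) : Integrable fun u ↦ gaussianPDFReal m v u * f u := by
  rw [gaussianReal_of_var_ne_zero m hv, integrable_withDensity_iff_integrable_smul'
    (measurable_gaussianPDF m v) (ae_of_all _ fun _ ↦ gaussianPDF_lt_top)] at hf
  simpa only [toReal_gaussianPDF, smul_eq_mul] using hf

theorem gaussianPDFReal_eq_mul_exp (m : ℝ) (v : ℝ≥0) (u : ℝ) :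
    gaussianPDFReal m v u =
      (√(2 * Real.pi * v))⁻¹ * Real.exp (-(u ^ 2 + m ^ 2) / (2 * v)) * Real.exp (u * m / v) := by
  rw [gaussianPDFReal, mul_assoc _ (Real.exp _), ← Real.exp_add]
  congr 2
  obtain rfl | hv := eq_or_ne v 0
  · simp
  · have : (v : ℝ) ≠ 0 := by exact_mod_cast hv
    field_simp
    ring

theorem integral_gaussianReal_eq_integral_Ioi (hv : v ≠ 0) {m : ℝ}
    (hf : Integrable f (gaussianReal m v)) :
    ∫ u, f u ∂gaussianReal m v = (√(2 * Real.pi * v))⁻¹ *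
      ∫ u in Set.Ioi 0, Real.exp (-(u ^ 2 + m ^ 2) / (2 * v)) *
        (Real.exp (u * m / v) * f u + Real.exp (-(u * m / v)) * f (-u)) := by
  simp only [integral_gaussianReal_eq_integral_smul hv, smul_eq_mul]
  rw [integral_eq_integral_Ioi_add_comp_neg (integrable_gaussianPDFReal_mul hv hf),
    ← integral_const_mul]
  congr 1 with u
  rw [gaussianPDFReal_eq_mul_exp, gaussianPDFReal_eq_mul_exp, neg_sq, neg_mul, neg_div _ (u * m)]
  ring

theorem integral_gaussianReal_of_odd (hv : v ≠ 0) {m : ℝ} (hf : Integrable f (gaussianReal m v))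
    (hodd : Function.Odd f) :
    ∫ u, f u ∂gaussianReal m v = 2 / √(2 * Real.pi * v) *
      ∫ u in Set.Ioi 0, Real.exp (-(u ^ 2 + m ^ 2) / (2 * v)) * Real.sinh (u * m / v) * f u := by
  rw [integral_gaussianReal_eq_integral_Ioi hv hf, ← integral_const_mul, ← integral_const_mul]
  congr 1 with u
  rw [hodd, Real.sinh_eq]
  ring

theorem integral_gaussianReal_of_even (hv : v ≠ 0) {m : ℝ} (hf : Integrable f (gaussianReal m v))
    (heven : Function.Even f) :
    ∫ u, f u ∂gaussianReal m v = 2 / √(2 * Real.pi * v) *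
      ∫ u in Set.Ioi 0, Real.exp (-(u ^ 2 + m ^ 2) / (2 * v)) * Real.cosh (u * m / v) * f u := by
  rw [integral_gaussianReal_eq_integral_Ioi hv hf, ← integral_const_mul, ← integral_const_mul]
  congr 1 with u
  rw [heven, Real.cosh_eq]
  ring

end Gaussian

section PosteriorSign

/-- The posterior mean of `ε` given the observation `u = ε * m + n`, where `ε` is a uniform random
sign and `n` is Gaussian noise of variance `σ ^ 2`. -/
noncomputable def posteriorSign (σ m u : ℝ) : ℝ := Real.tanh (u * m / σ ^ 2)

variable (σ m : ℝ)

theorem odd_posteriorSign : Function.Odd (posteriorSign σ m) := fun u ↦ by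
  rw [posteriorSign, posteriorSign, neg_mul, neg_div, Real.tanh_neg]

theorem continuous_posteriorSign : Continuous (posteriorSign σ m) := by
  unfold posteriorSign
  simp only [Real.tanh_eq_sinh_div_cosh]
  exact Continuous.div (by fun_prop) (by fun_prop) fun u ↦ (Real.cosh_pos _).ne'

theorem memLp_posteriorSign (p : ℝ≥0∞) (μ : Measure ℝ) [IsFiniteMeasure μ] :
    MemLp (posteriorSign σ m) p μ :=
  .of_bound (continuous_posteriorSign σ m).aestronglyMeasurable 1 <|
    ae_of_all _ fun _ ↦ (Real.abs_tanh_lt_one _).le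

theorem integral_posteriorSign {σ : ℝ} (hσ : σ ≠ 0) (m : ℝ) :
    ∫ u, posteriorSign σ m u ∂gaussianReal m (σ ^ 2).toNNReal = g σ m := by
  rw [integral_gaussianReal_of_odd (Real.toNNReal_pos.mpr (by positivity)).ne'
      ((memLp_posteriorSign σ m 1 _).integrable le_rfl) (odd_posteriorSign σ m),
    Real.coe_toNNReal _ (sq_nonneg σ)]
  rfl

theorem integral_posteriorSign_sq {σ : ℝ} (hσ : σ ≠ 0) (m : ℝ) :
    ∫ u, posteriorSign σ m u ^ 2 ∂gaussianReal m (σ ^ 2).toNNReal = g σ m := by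
  have heven : Function.Even fun u ↦ posteriorSign σ m u ^ 2 := fun u ↦ by
    simp only [odd_posteriorSign σ m u, neg_sq]
  have hcosh (t : ℝ) : Real.cosh t * Real.tanh t ^ 2 = Real.sinh t * Real.tanh t := by
    rw [Real.tanh_eq_sinh_div_cosh]
    field_simp [(Real.cosh_pos t).ne']
  rw [integral_gaussianReal_of_even (Real.toNNReal_pos.mpr (by positivity)).ne'
      (memLp_posteriorSign σ m 2 _).integrable_sq heven,
    Real.coe_toNNReal _ (sq_nonneg σ)]
  simp only [g, posteriorSign, mul_assoc, hcosh]

end PosteriorSign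

section SparseModel

variable {N S : ℕ} {σ : ℝ} {A : Finset (Fin N)} {h : Fin N → ℝ → ℝ} {x : Fin N → ℝ}

theorem mem_supp {i : Fin N} : i ∈ supp x ↔ x i ≠ 0 := by
  simp only [supp, Finset.mem_filter_univ]

theorem eq_zero_of_supp_subset (hx : supp x ⊆ A) {i : Fin N} (hi : i ∉ A) : x i = 0 :=
  not_not.mp fun hxi ↦ hi (hx (mem_supp.mpr hxi))

theorem exists_mem_eq_zero_of_mem_sparseSet (hx : x ∈ sparseSet N S) (hA : S ≤ A.card) {i : Fin N}
    (hi : i ∉ A) (hxi : x i ≠ 0) : ∃ l ∈ A, x l = 0 := by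
  by_contra! hne
  have hsub : insert i A ⊆ supp x :=
    Finset.insert_subset (mem_supp.mpr hxi) fun l hl ↦ mem_supp.mpr (hne l hl)
  have hcard := (Finset.card_le_card hsub).trans hx
  rw [Finset.card_insert_of_notMem hi] at hcard
  lia

theorem unbiased_productShrinkage (hA : S ≤ A.card) (hodd : ∀ l ∈ A, Function.Odd (h l))
    (hh : ∀ l ∈ A, ∀ m, Integrable (h l) (gaussianReal m (σ ^ 2).toNNReal)) :
    Unbiased N S σ (productShrinkage A h) := by
  intro x hx i
  have hid : Integrable (fun u ↦ u) (gaussianReal (x i) (σ ^ 2).toNNReal) :=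
    (memLp_id_gaussianReal 1).integrable le_rfl
  refine ⟨integrable_productShrinkage hid fun l hl ↦ hh l hl _, ?_⟩
  rw [gaussP]
  by_cases hi : i ∈ A
  · simp only [productShrinkage_of_mem hi]
    rw [integral_eval, integral_id_gaussianReal]
  rw [integral_productShrinkage_of_notMem hi hid fun l hl ↦ hh l hl _, integral_id_gaussianReal]
  obtain hxi | hxi := eq_or_ne (x i) 0
  · rw [hxi, zero_mul]
  obtain ⟨l, hl, hxl⟩ := exists_mem_eq_zero_of_mem_sparseSet hx hA hi hxi
  have hmean : ∫ u, h l u ∂gaussianReal (x l) (σ ^ 2).toNNReal = 0 := by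
    rw [hxl]
    exact integral_eq_zero_of_odd (hodd l hl)
  rw [Finset.prod_eq_zero hl hmean, sub_zero, mul_one]

theorem MSE_eq_ofReal_sum {est : (Fin N → ℝ) → Fin N → ℝ}
    (hest : ∀ i, Integrable (fun y ↦ (est y i - x i) ^ 2) (gaussP N σ x)) :
    MSE N σ est x = ENNReal.ofReal (∑ i, ∫ y, (est y i - x i) ^ 2 ∂gaussP N σ x) := by
  rw [MSE, ← ofReal_integral_eq_lintegral_ofReal (integrable_finsetSum _ fun i _ ↦ hest i)
    (ae_of_all _ fun y ↦ Finset.sum_nonneg fun i _ ↦ sq_nonneg _),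
    integral_finsetSum _ fun i _ ↦ hest i]

theorem integrable_productShrinkage_sub_sq_gaussP (hx : supp x ⊆ A)
    (hh : ∀ l ∈ A, MemLp (h l) 2 (gaussianReal (x l) (σ ^ 2).toNNReal)) (i : Fin N) :
    Integrable (fun y ↦ (productShrinkage A h y i - x i) ^ 2) (gaussP N σ x) := by
  by_cases hi : i ∈ A
  · simp only [productShrinkage_of_mem hi]
    exact integrable_comp_eval (X := fun _ ↦ ℝ) (μ := fun i ↦ gaussianReal (x i) (σ ^ 2).toNNReal)
      (integrable_sub_sq_gaussianReal (x i) _)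
  · simp only [eq_zero_of_supp_subset hx hi, sub_zero]
    exact integrable_productShrinkage_sq_of_notMem hi (memLp_id_gaussianReal' 2 (by simp)) hh

theorem integral_productShrinkage_sub_sq_gaussP_of_mem {i : Fin N} (hi : i ∈ A) :
    ∫ y, (productShrinkage A h y i - x i) ^ 2 ∂gaussP N σ x = σ ^ 2 := by
  simp only [productShrinkage_of_mem hi]
  rw [gaussP, integral_comp_eval (X := fun _ ↦ ℝ) (f := fun u ↦ (u - x i) ^ 2) (by fun_prop),
    integral_sub_sq_gaussianReal, Real.coe_toNNReal _ (sq_nonneg σ)]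

theorem integral_productShrinkage_sub_sq_gaussP_of_notMem {i : Fin N} (hi : i ∉ A) (hxi : x i = 0)
    (hh : ∀ l ∈ A, MemLp (h l) 2 (gaussianReal (x l) (σ ^ 2).toNNReal)) :
    ∫ y, (productShrinkage A h y i - x i) ^ 2 ∂gaussP N σ x = σ ^ 2 *
      (1 - 2 * ∏ l ∈ A, ∫ u, h l u ∂gaussianReal (x l) (σ ^ 2).toNNReal +
        ∏ l ∈ A, ∫ u, h l u ^ 2 ∂gaussianReal (x l) (σ ^ 2).toNNReal) := by
  have hsecond := integral_sub_sq_gaussianReal (x i) (σ ^ 2).toNNReal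
  simp only [hxi, sub_zero, Real.coe_toNNReal _ (sq_nonneg σ)] at hsecond ⊢
  rw [gaussP, integral_productShrinkage_sq_of_notMem hi (memLp_id_gaussianReal' 2 (by simp)) hh,
    hxi, hsecond]

theorem MSE_productShrinkage (hx : supp x ⊆ A)
    (hh : ∀ l ∈ A, MemLp (h l) 2 (gaussianReal (x l) (σ ^ 2).toNNReal)) :
    MSE N σ (productShrinkage A h) x = ENNReal.ofReal (A.card * σ ^ 2 + (N - A.card) * (σ ^ 2 *
      (1 - 2 * ∏ l ∈ A, ∫ u, h l u ∂gaussianReal (x l) (σ ^ 2).toNNReal +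
        ∏ l ∈ A, ∫ u, h l u ^ 2 ∂gaussianReal (x l) (σ ^ 2).toNNReal))) := by
  rw [MSE_eq_ofReal_sum (integrable_productShrinkage_sub_sq_gaussP hx hh),
    ← A.sum_add_sum_compl,
    Finset.sum_congr rfl fun i hi ↦ integral_productShrinkage_sub_sq_gaussP_of_mem hi,
    Finset.sum_congr rfl fun i hi ↦
      have hiA : i ∉ A := Finset.mem_compl.mp hi
      integral_productShrinkage_sub_sq_gaussP_of_notMem hiA (eq_zero_of_supp_subset hx hiA) hh,
    Finset.sum_const, Finset.sum_const, Finset.card_compl, Fintype.card_fin, nsmul_eq_mul,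
    nsmul_eq_mul, Nat.cast_sub (card_finset_fin_le A)]

end SparseModel

/-- The Barankin bound at `x₀` (with `‖x₀‖₀ = S`) is bounded above by the constrained
Barankin bound `BB_c(x₀) = Sσ² + (N−S)σ²(1 − ∏_{l ∈ supp(x₀)} g(x₀_l; σ²))`:
some measurable unbiased estimator attains this MSE at `x₀`. -/
theorem stmt_5 (N S : ℕ) (σ : ℝ) (hσ : 0 < σ) (hS : 1 ≤ S) (hSN : S < N)
    (x₀ : Fin N → ℝ) (hcard : (supp x₀).card = S) :
    ∃ est : (Fin N → ℝ) → Fin N → ℝ, Measurable est ∧ Unbiased N S σ est ∧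
      MSE N σ est x₀ = ENNReal.ofReal ((S : ℝ) * σ ^ 2 +
        ((N : ℝ) - S) * σ ^ 2 * (1 - ∏ l ∈ supp x₀, g σ (x₀ l))) := by
  let h : Fin N → ℝ → ℝ := fun l ↦ posteriorSign σ (x₀ l)
  have hmem (l : Fin N) (p : ℝ≥0∞) (m : ℝ) :
      MemLp (h l) p (gaussianReal m (σ ^ 2).toNNReal) := memLp_posteriorSign σ (x₀ l) p _
  refine ⟨productShrinkage (supp x₀) h, ?_, ?_, ?_⟩
  · exact measurable_productShrinkage fun l _ ↦ (continuous_posteriorSign σ (x₀ l)).measurable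
  · exact unbiased_productShrinkage hcard.ge (fun l _ ↦ odd_posteriorSign σ (x₀ l))
      fun l _ m ↦ (hmem l 1 m).integrable le_rfl
  · rw [MSE_productShrinkage subset_rfl fun l _ ↦ hmem l 2 (x₀ l), hcard]
    simp only [h, integral_posteriorSign hσ.ne', integral_posteriorSign_sq hσ.ne']
    congr 1
    ring
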